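/- Fix three distinct elements i, j, k of P. Then the Keel module V_P is a free ℤ-module, and the images of the elements e_S with i ∈ S and 2 ≤ |S| ≤ n−3, together with the image of e_{{j,k}}, form a ℤ-basis of V_P. (Proposition 4.2: H²( M̄_{0,P}; ℤ) is freely generated by the classes δ_S with i ∈ S and 2 ≤ |S| ≤ n−3, or S = {j,k}.) -/

import Mathlib

/-- `B(P)`: the set of subsets `S ⊆ P` with `2 ≤ |S| ≤ n - 2`, as a subtype. -/
abbrev KeelB (P : Type*) [Fintype P] [DecidableEq P] : Type _ :=
  {S : Finset P // 2 ≤ S.card ∧ S.card ≤ Fintype.card P - 2}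

/-- The complement operation on `B(P)`. -/
def KeelB.compl {P : Type*} [Fintype P] [DecidableEq P] (S : KeelB P) : KeelB P :=
  ⟨(S : Finset P)ᶜ, by
    have h1 := S.2.1
    have h2 := S.2.2
    have h3 : (S : Finset P).card ≤ Fintype.card P := Finset.card_le_univ _
    rw [Finset.card_compl]
    omega⟩

/-- The sum `Σ_{S ∈ B(P), p,q ∈ S, r,s ∉ S} e_S` in the free ℤ-module on `B(P)`. -/
noncomputable def keelQuad {P : Type*} [Fintype P] [DecidableEq P] (p q r s : P) : KeelB P →₀ ℤ :=
  ∑ S ∈ Finset.univ.filter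
      (fun S : KeelB P =>
        p ∈ (S : Finset P) ∧ q ∈ (S : Finset P) ∧ r ∉ (S : Finset P) ∧ s ∉ (S : Finset P)),
    Finsupp.single S 1

/-- The defining relations of the Keel module: (i) `e_S - e_{P∖S}` for `S ∈ B(P)`;
(ii) the four-point relations for every quadruple of distinct elements of `P`. -/
def keelRels (P : Type*) [Fintype P] [DecidableEq P] : Set (KeelB P →₀ ℤ) :=
  (Set.range fun S : KeelB P => Finsupp.single S 1 - Finsupp.single S.compl 1) ∪
  {x | ∃ p q r s : P, p ≠ q ∧ p ≠ r ∧ p ≠ s ∧ q ≠ r ∧ q ≠ s ∧ r ≠ s ∧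
      (x = keelQuad p q r s - keelQuad p r q s ∨ x = keelQuad p q r s - keelQuad p s q r)}

/-- The Keel module `V_P`: the free ℤ-module on `B(P)` modulo the Keel relations. -/
abbrev KeelModule (P : Type*) [Fintype P] [DecidableEq P] : Type _ :=
  (KeelB P →₀ ℤ) ⧸ Submodule.span ℤ (keelRels P)

/-- The image of the basis element `e_S` in the Keel module. -/
noncomputable def keelClass {P : Type*} [Fintype P] [DecidableEq P] (S : KeelB P) : KeelModule P :=
  Submodule.Quotient.mk (Finsupp.single S 1)

namespace Keel

variable {P : Type*} [Fintype P] [DecidableEq P] {M : Type*} [AddCommGroup M]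

/-- The sum of `f S` over the `S ∈ B(P)` with `p, q ∈ S` and `r, s ∉ S`. -/
def quad (f : KeelB P → M) (p q r s : P) : M :=
  ∑ S : KeelB P, if p ∈ S.1 ∧ q ∈ S.1 ∧ r ∉ S.1 ∧ s ∉ S.1 then f S else 0

/-- The sum of `f S` over the `S ∈ B(P)` with `i ∈ S` and `a, b ∉ S`; for boundary classes this is
the cotangent class at `i`. -/
def psi (f : KeelB P → M) (i a b : P) : M :=
  ∑ S : KeelB P, if i ∈ S.1 ∧ a ∉ S.1 ∧ b ∉ S.1 then f S else 0

theorem linearCombination_keelQuad (f : KeelB P → M) (p q r s : P) :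
    Finsupp.linearCombination ℤ f (keelQuad p q r s) = quad f p q r s := by
  simp only [keelQuad, quad, map_sum, Finset.sum_filter, apply_ite (Finsupp.linearCombination ℤ f),
    Finsupp.linearCombination_single, one_smul, map_zero]

theorem mem_compl {S : KeelB P} {a : P} : a ∈ S.compl.1 ↔ a ∉ S.1 := Finset.mem_compl

theorem compl_compl (S : KeelB P) : S.compl.compl = S := Subtype.ext (_root_.compl_compl S.1)

/-- Complementation as a permutation of `B(P)`. -/
def complEquiv : KeelB P ≃ KeelB P := ⟨KeelB.compl, KeelB.compl, compl_compl, compl_compl⟩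

theorem complEquiv_apply (S : KeelB P) : complEquiv S = S.compl := rfl

theorem psi_comm (f : KeelB P → M) (i a b : P) : psi f i a b = psi f i b a := by
  simp only [psi, and_comm (a := a ∉ _)]

theorem psi_eq_quad_add (f : KeelB P → M) (i q r s : P) :
    psi f i r s = quad f i q r s +
      ∑ S : KeelB P, if i ∈ S.1 ∧ q ∉ S.1 ∧ r ∉ S.1 ∧ s ∉ S.1 then f S else 0 := by
  rw [psi, quad, ← Finset.sum_add_distrib]
  refine Finset.sum_congr rfl fun S _ => ?_
  by_cases hi : i ∈ S.1 <;> by_cases hq : q ∈ S.1 <;> by_cases hr : r ∈ S.1 <;>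
    by_cases hs : s ∈ S.1 <;> simp [hi, hq, hr, hs]

/-- Exchanging the two middle arguments of `quad` changes it by a difference of `psi`s. -/
theorem quad_sub_quad_base (f : KeelB P → M) (i q r s : P) :
    quad f i q r s - quad f i r q s = psi f i r s - psi f i q s := by
  rw [psi_eq_quad_add f i q r s, psi_eq_quad_add f i r q s]
  simp only [and_left_comm (a := r ∉ _) (b := q ∉ _), add_sub_add_right_eq_sub]

theorem quad_eq_sum_mem (f : KeelB P → M) (hf : ∀ S, f S.compl = f S) (i p q r s : P) :
    quad f p q r s = ∑ S : KeelB P,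
      ((if i ∈ S.1 ∧ p ∈ S.1 ∧ q ∈ S.1 ∧ r ∉ S.1 ∧ s ∉ S.1 then f S else 0) +
        if i ∈ S.1 ∧ p ∉ S.1 ∧ q ∉ S.1 ∧ r ∈ S.1 ∧ s ∈ S.1 then f S else 0) := by
  have key : (∑ S : KeelB P,
      if i ∈ S.1 ∧ p ∉ S.1 ∧ q ∉ S.1 ∧ r ∈ S.1 ∧ s ∈ S.1 then f S else 0) =
      ∑ S : KeelB P,
        if i ∉ S.1 ∧ p ∈ S.1 ∧ q ∈ S.1 ∧ r ∉ S.1 ∧ s ∉ S.1 then f S else 0 := by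
    refine Fintype.sum_equiv complEquiv _ _ fun S => ?_
    simp [complEquiv_apply, mem_compl, hf]
  rw [Finset.sum_add_distrib, key, quad, ← Finset.sum_add_distrib]
  refine Finset.sum_congr rfl fun S _ => ?_
  by_cases hi : i ∈ S.1 <;> simp [hi]

/-- The inclusion-exclusion identity comparing two four-point sums away from `i`. -/
theorem quad_sub_quad (f : KeelB P → M) (hf : ∀ S, f S.compl = f S) (i p q r s : P) :
    quad f p q r s - quad f p r q s =
      psi f i p q + psi f i r s - psi f i p r - psi f i q s := by
  rw [quad_eq_sum_mem f hf i, quad_eq_sum_mem f hf i]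
  simp only [psi, ← Finset.sum_add_distrib, ← Finset.sum_sub_distrib]
  refine Finset.sum_congr rfl fun S _ => ?_
  by_cases hi : i ∈ S.1 <;> by_cases hp : p ∈ S.1 <;> by_cases hq : q ∈ S.1 <;>
    by_cases hr : r ∈ S.1 <;> by_cases hs : s ∈ S.1 <;> simp [hi, hp, hq, hr, hs]

theorem quad_comm_right (f : KeelB P → M) (p q r s : P) : quad f p q r s = quad f p q s r := by
  simp only [quad, and_comm (a := r ∉ _)]

theorem quad_comm_left (f : KeelB P → M) (p q r s : P) : quad f p q r s = quad f q p r s := by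
  simp only [quad, and_left_comm (a := p ∈ _)]

theorem quad_swap (f : KeelB P → M) (hf : ∀ S, f S.compl = f S) (p q r s : P) :
    quad f p q r s = quad f r s p q := by
  refine Fintype.sum_equiv complEquiv _ _ fun S => ?_
  have : (p ∈ S.1 ∧ q ∈ S.1 ∧ r ∉ S.1 ∧ s ∉ S.1) ↔ (r ∉ S.1 ∧ s ∉ S.1 ∧ p ∈ S.1 ∧ q ∈ S.1) := by
    tauto
  simp [complEquiv_apply, mem_compl, hf, this]

/-- If all `psi`s at `i` agree, the four-point relations hold. -/
theorem quad_eq_quad (f : KeelB P → M) (hf : ∀ S, f S.compl = f S) (i : P) (m : M)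
    (hm : ∀ a b, i ≠ a → i ≠ b → a ≠ b → psi f i a b = m) {p q r s : P} (hpq : p ≠ q)
    (hpr : p ≠ r) (hps : p ≠ s) (hqr : q ≠ r) (hqs : q ≠ s) (hrs : r ≠ s) :
    quad f p q r s = quad f p r q s := by
  have base : ∀ q r s, i ≠ q → i ≠ r → i ≠ s → r ≠ s → q ≠ s →
      quad f i q r s = quad f i r q s := fun q r s hq hr hs hrs hqs => by
    rw [← sub_eq_zero, quad_sub_quad_base, hm r s hr hs hrs, hm q s hq hs hqs, sub_self]
  by_cases hp : i = p
  · subst hp; exact base q r s hpq hpr hps hrs hqs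
  by_cases hq : i = q
  · subst hq
    rw [quad_comm_left, quad_swap f hf p r,
      base s p r hqs hpq.symm hqr hpr hrs.symm, quad_comm_right]
  by_cases hr : i = r
  · subst hr
    rw [quad_swap f hf p q, quad_comm_left f p i, base s p q hrs hpr.symm hqr.symm hpq hqs.symm,
      quad_comm_right]
  by_cases hs : i = s
  · subst hs
    rw [quad_swap f hf p q, quad_comm_left f r, quad_swap f hf p r, quad_comm_left f q,
      quad_comm_right f i r, base r q p hrs.symm hqs.symm hps.symm hpq.symm hpr.symm,
      quad_comm_right]
  rw [← sub_eq_zero, quad_sub_quad f hf i, hm p q hp hq hpq, hm r s hr hs hrs, hm p r hp hr hpr,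
    hm q s hq hs hqs]
  abel

theorem keelClass_compl (S : KeelB P) : keelClass S.compl = keelClass S :=
  Eq.symm <| (Submodule.Quotient.eq (Submodule.span ℤ (keelRels P))).2 <|
    Submodule.subset_span (Or.inl ⟨S, rfl⟩)

theorem mk_eq_linearCombination (x : KeelB P →₀ ℤ) :
    (Submodule.Quotient.mk x : KeelModule P) = Finsupp.linearCombination ℤ keelClass x := by
  have : (Submodule.span ℤ (keelRels P)).mkQ = Finsupp.linearCombination ℤ keelClass := by
    ext S; simp [keelClass]
  exact LinearMap.congr_fun this x

theorem quad_keelClass {p q r s : P} (hpq : p ≠ q)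
    (hpr : p ≠ r) (hps : p ≠ s) (hqr : q ≠ r) (hqs : q ≠ s) (hrs : r ≠ s) :
    quad (keelClass (P := P)) p q r s = quad keelClass p r q s := by
  rw [← linearCombination_keelQuad, ← linearCombination_keelQuad, ← mk_eq_linearCombination,
    ← mk_eq_linearCombination, Submodule.Quotient.eq]
  exact Submodule.subset_span (Or.inr ⟨p, q, r, s, hpq, hpr, hps, hqr, hqs, hrs, Or.inl rfl⟩)

theorem psi_keelClass_exchange {i a b c : P} (ha : i ≠ a) (hb : i ≠ b) (hc : i ≠ c)
    (hab : a ≠ b) (hcb : c ≠ b) :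
    psi (keelClass (P := P)) i a b = psi keelClass i c b := by
  by_cases hac : a = c
  · rw [hac]
  rw [← sub_eq_zero, ← quad_sub_quad_base,
    quad_keelClass hc ha hb (Ne.symm hac) hcb hab, sub_self]

/-- In the Keel module the class `psi` at `i` does not depend on the auxiliary pair. -/
theorem psi_keelClass {i a b c d : P} (ha : i ≠ a) (hb : i ≠ b) (hc : i ≠ c) (hd : i ≠ d)
    (hab : a ≠ b) (hcd : c ≠ d) :
    psi (keelClass (P := P)) i a b = psi keelClass i c d := by
  by_cases hbc : b = c
  · subst hbc
    rw [psi_comm _ i b d]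
    exact psi_keelClass_exchange ha hb hd hab hcd.symm
  · rw [psi_keelClass_exchange ha hb hc hab (Ne.symm hbc), psi_comm,
      psi_keelClass_exchange hb hc hd hbc hcd.symm, psi_comm]

/-- The index type of the basis. -/
abbrev Index (i j k : P) : Type _ :=
  {S : KeelB P // (i ∈ (S : Finset P) ∧
    (S : Finset P).card ≤ Fintype.card P - 3) ∨ (S : Finset P) = {j, k}}

/-- The two-element set `{a, b}` as an element of `B(P)`. -/
def pair (hn : 4 ≤ Fintype.card P) {a b : P} (hab : a ≠ b) : KeelB P :=
  ⟨{a, b}, by rw [Finset.card_pair hab]; omega⟩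

theorem card_compl_pair (hn : 4 ≤ Fintype.card P) {a b : P} (hab : a ≠ b) :
    (pair hn hab).compl.1.card = Fintype.card P - 2 := by
  rw [KeelB.compl, pair, Finset.card_compl, Finset.card_pair hab]

/-- The part of `psi f i a b` supported on the basis index set. -/
def psiIndex {i j k : P} (f : Index i j k → M) (a b : P) : M :=
  ∑ S : Index i j k, if i ∈ S.1.1 ∧ a ∉ S.1.1 ∧ b ∉ S.1.1 then f S else 0

theorem psi_eq_add_psiIndex (hn : 4 ≤ Fintype.card P) {i j k a b : P} (hij : i ≠ j) (hik : i ≠ k)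
    (ha : i ≠ a) (hb : i ≠ b) (hab : a ≠ b) (f : KeelB P → M) :
    psi f i a b = f (pair hn hab).compl + psiIndex (fun S : Index i j k => f S.1) a b := by
  rw [psi, ← Fintype.sum_subtype_add_sum_subtype (fun S : KeelB P => (i ∈ (S : Finset P) ∧
    (S : Finset P).card ≤ Fintype.card P - 3) ∨ (S : Finset P) = {j, k}), add_comm]
  congr 1
  have hcard := card_compl_pair hn hab
  have hi : i ∈ (pair hn hab).compl.1 := by simp [mem_compl, pair, ha, hb]
  have hnot : ¬ ((i ∈ (pair hn hab).compl.1 ∧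
      (pair hn hab).compl.1.card ≤ Fintype.card P - 3) ∨ (pair hn hab).compl.1 = {j, k}) := by
    rintro (h | h)
    · omega
    · rw [h] at hi
      simp [hij, hik] at hi
  rw [Fintype.sum_eq_single ⟨(pair hn hab).compl, hnot⟩]
  · simp [mem_compl, pair, ha, hb]
  · rintro ⟨S, hS⟩ hne
    refine if_neg fun ⟨h1, h2, h3⟩ => hne (Subtype.ext (Subtype.ext ?_))
    refine Finset.eq_of_subset_of_card_le (fun x hx => ?_) ?_
    · simp only [mem_compl, pair, Finset.mem_insert, Finset.mem_singleton]
      rintro (rfl | rfl)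
      exacts [h2 hx, h3 hx]
    · have hlt : ¬ S.1.card ≤ Fintype.card P - 3 := fun h => hS (Or.inl ⟨h1, h⟩)
      change (pair hn hab).compl.1.card ≤ S.1.card
      omega

open Classical in
/-- The coordinates of the class of `S`, for `S` containing `i`: either `S` is a basis index, or `S`
is the complement of a pair `{a, b}`, whose class is determined by `psi`. -/
noncomputable def coordMem (hn : 4 ≤ Fintype.card P) (i : P) {j k : P} (hjk : j ≠ k)
    (S : KeelB P) : Index i j k →₀ ℤ :=
  if h : i ∈ S.1 ∧ S.1.card ≤ Fintype.card P - 3 then Finsupp.single ⟨S, Or.inl h⟩ 1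
  else if h : ∃ a b : P, a ≠ b ∧ S.compl.1 = {a, b} then
    Finsupp.single ⟨pair hn hjk, Or.inr rfl⟩ 1 + psiIndex (fun T => Finsupp.single T 1) j k -
      psiIndex (fun T => Finsupp.single T 1) h.choose h.choose_spec.choose
  else 0

theorem psiIndex_congr {i j k a b c d : P} (f : Index i j k → M)
    (h : ({a, b} : Finset P) = {c, d}) : psiIndex f a b = psiIndex f c d := by
  refine Finset.sum_congr rfl fun S _ => ?_
  have key : ∀ x y : P, (x ∉ S.1.1 ∧ y ∉ S.1.1) ↔ Disjoint {x, y} S.1.1 := fun x y => by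
    simp
  simp only [key, h]

theorem coordMem_compl_pair (hn : 4 ≤ Fintype.card P) (i : P) {j k a b : P} (hjk : j ≠ k)
    (hab : a ≠ b) :
    coordMem hn i hjk (pair hn hab).compl =
      Finsupp.single ⟨pair hn hjk, Or.inr rfl⟩ 1 + psiIndex (fun T => Finsupp.single T 1) j k -
        psiIndex (fun T => Finsupp.single T 1) a b := by
  have hcard := card_compl_pair hn hab
  have h : ∃ c d : P, c ≠ d ∧ (pair hn hab).compl.compl.1 = {c, d} :=
    ⟨a, b, hab, by rw [compl_compl]; rfl⟩
  rw [coordMem, dif_neg (by omega), dif_pos h]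
  congr 1
  refine psiIndex_congr _ (h.choose_spec.choose_spec.2.symm.trans ?_)
  rw [compl_compl]; rfl

/-- The coordinates of the class of an arbitrary `S ∈ B(P)`. -/
noncomputable def coord (hn : 4 ≤ Fintype.card P) (i : P) {j k : P} (hjk : j ≠ k)
    (S : KeelB P) : Index i j k →₀ ℤ :=
  if i ∈ S.1 then coordMem hn i hjk S else coordMem hn i hjk S.compl

theorem coord_compl (hn : 4 ≤ Fintype.card P) (i : P) {j k : P} (hjk : j ≠ k) (S : KeelB P) :
    coord hn i hjk S.compl = coord hn i hjk S := by
  by_cases h : i ∈ S.1 <;> simp [coord, mem_compl, h, compl_compl]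

theorem coord_pair (hn : 4 ≤ Fintype.card P) {i j k a b : P} (hjk : j ≠ k)
    (ha : i ≠ a) (hb : i ≠ b) (hab : a ≠ b) :
    coord hn i hjk (pair hn hab) =
      Finsupp.single ⟨pair hn hjk, Or.inr rfl⟩ 1 + psiIndex (fun T => Finsupp.single T 1) j k -
        psiIndex (fun T => Finsupp.single T 1) a b := by
  rw [coord, if_neg (by simp [pair, ha, hb]), coordMem_compl_pair]

theorem coord_index (hn : 4 ≤ Fintype.card P) {i j k : P} (hij : i ≠ j) (hik : i ≠ k) (hjk : j ≠ k)
    (S : Index i j k) : coord hn i hjk S.1 = Finsupp.single S 1 := by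
  obtain ⟨S, h | h⟩ := S
  · simp only [coord, coordMem, if_pos h.1, dif_pos h]
  · obtain rfl : S = pair hn hjk := Subtype.ext h
    rw [coord_pair hn hjk hij hik hjk, add_sub_cancel_right]

theorem psi_coord (hn : 4 ≤ Fintype.card P) {i j k a b : P} (hij : i ≠ j) (hik : i ≠ k)
    (hjk : j ≠ k) (ha : i ≠ a) (hb : i ≠ b) (hab : a ≠ b) :
    psi (coord hn i hjk) i a b =
      Finsupp.single ⟨pair hn hjk, Or.inr rfl⟩ 1 +
        psiIndex (fun T => Finsupp.single T 1) j k := by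
  simp only [psi_eq_add_psiIndex hn hij hik ha hb hab, coord_index hn hij hik hjk, coord_compl,
    coord_pair hn hjk ha hb hab, sub_add_cancel]

theorem span_keelRels_le_ker (f : KeelB P → M) (hf : ∀ S, f S.compl = f S) (i : P) (m : M)
    (hm : ∀ a b, i ≠ a → i ≠ b → a ≠ b → psi f i a b = m) :
    Submodule.span ℤ (keelRels P) ≤ LinearMap.ker (Finsupp.linearCombination ℤ f) := by
  rw [Submodule.span_le]
  rintro x (⟨S, rfl⟩ | ⟨p, q, r, s, hpq, hpr, hps, hqr, hqs, hrs, rfl | rfl⟩)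
  · simp [hf]
  · simp only [SetLike.mem_coe, LinearMap.mem_ker, map_sub, linearCombination_keelQuad]
    rw [quad_eq_quad f hf i m hm hpq hpr hps hqr hqs hrs, sub_self]
  · simp only [SetLike.mem_coe, LinearMap.mem_ker, map_sub, linearCombination_keelQuad]
    rw [quad_comm_right f p q, quad_eq_quad f hf i m hm hpq hps hpr hqs hqr hrs.symm, sub_self]

theorem map_psiIndex {N : Type*} [AddCommGroup N] (g : M →ₗ[ℤ] N) {i j k : P}
    (f : Index i j k → M) (a b : P) : g (psiIndex f a b) = psiIndex (fun S => g (f S)) a b := by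
  simp only [psiIndex, map_sum, apply_ite g, map_zero]

theorem exists_pair_of_lt_card (hn : 4 ≤ Fintype.card P) {i : P} {S : KeelB P} (hi : i ∈ S.1)
    (h : ¬ S.1.card ≤ Fintype.card P - 3) :
    ∃ (a b : P) (hab : a ≠ b), i ≠ a ∧ i ≠ b ∧ S = (pair hn hab).compl := by
  have hc : S.compl.1.card = 2 := by
    have := S.2.2
    rw [KeelB.compl, Finset.card_compl]
    omega
  obtain ⟨a, b, hab, he⟩ := Finset.card_eq_two.1 hc
  have hS : S.compl = pair hn hab := Subtype.ext he
  have hi' : i ∉ S.compl.1 := fun h => mem_compl.1 h hi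
  rw [he] at hi'
  simp only [Finset.mem_insert, Finset.mem_singleton, not_or] at hi'
  exact ⟨a, b, hab, hi'.1, hi'.2, by rw [← hS, compl_compl]⟩

theorem linearCombination_coord (hn : 4 ≤ Fintype.card P) {i j k : P} (hij : i ≠ j) (hik : i ≠ k)
    (hjk : j ≠ k) (S : KeelB P) :
    Finsupp.linearCombination ℤ (fun T : Index i j k => keelClass T.1) (coord hn i hjk S) =
      keelClass S := by
  wlog hi : i ∈ S.1 generalizing S
  · rw [← coord_compl, ← keelClass_compl]
    exact this S.compl (mem_compl.2 hi)
  by_cases h : S.1.card ≤ Fintype.card P - 3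
  · rw [coord_index hn hij hik hjk ⟨S, Or.inl ⟨hi, h⟩⟩]
    simp
  · obtain ⟨a, b, hab, ha, hb, rfl⟩ := exists_pair_of_lt_card hn hi h
    have key := psi_keelClass hij hik ha hb hjk hab
    rw [psi_eq_add_psiIndex hn hij hik hij hik hjk, psi_eq_add_psiIndex hn hij hik ha hb hab,
      keelClass_compl] at key
    rw [coord_compl, coord_pair hn hjk ha hb hab, map_sub, map_add, map_psiIndex, map_psiIndex]
    simp only [Finsupp.linearCombination_single, one_smul]
    rw [key, add_sub_cancel_right]

/-- The coordinate isomorphism of the Keel module. -/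
noncomputable def coordEquiv (hn : 4 ≤ Fintype.card P) {i j k : P} (hij : i ≠ j) (hik : i ≠ k)
    (hjk : j ≠ k) : KeelModule P ≃ₗ[ℤ] (Index i j k →₀ ℤ) :=
  LinearEquiv.ofLinearMap
    ((Submodule.span ℤ (keelRels P)).liftQ (Finsupp.linearCombination ℤ (coord hn i hjk))
      (span_keelRels_le_ker _ (coord_compl hn i hjk) i _
        fun _ _ ha hb hab => psi_coord hn hij hik hjk ha hb hab))
    (Finsupp.linearCombination ℤ fun T : Index i j k => keelClass T.1)
    (by
      ext1 S
      ext1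
      simp [keelClass, coord_index hn hij hik hjk S])
    (by
      ext S
      simpa [keelClass] using linearCombination_coord hn hij hik hjk S)

end Keel

/-- Proposition 4.2: the Keel module `V_P` is a free ℤ-module, and the classes `δ_S`
with `i ∈ S` and `2 ≤ |S| ≤ n - 3`, or `S = {j,k}`, form a ℤ-basis of it. -/
theorem keelModule_basis (P : Type*) [Fintype P] [DecidableEq P]
    (hn : 4 ≤ Fintype.card P) (i j k : P) (hij : i ≠ j) (hik : i ≠ k) (hjk : j ≠ k) :
    ∃ b : Module.Basis {S : KeelB P // (i ∈ (S : Finset P) ∧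
        (S : Finset P).card ≤ Fintype.card P - 3) ∨ (S : Finset P) = {j, k}}
      ℤ (KeelModule P), ∀ S, b S = keelClass S.val := by
  refine ⟨.ofRepr (Keel.coordEquiv hn hij hik hjk), fun S => ?_⟩
  simp [Keel.coordEquiv]
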